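/- arXiv:2009.05892 — 4 statements merged into one kernel-verified Lean document; each statement's English description precedes it below -/
import Mathlib

section
/- Under the global causal null (formalized as: the treatment assignments A_1,…,A_n are independent {0,1}-valued random variables with P(A_i = 1) = μ_i, and the vector (A_1,…,A_n) is independent of the σ-algebra 𝒢 generated by all outcomes and covariates), for every α ∈ (0,1), the i-bet test controls the type-I error: P(∃ t ∈ {1,…,n−|I_0|} : M_t ≥ 1/α) ≤ α, regardless of how the predictable choices π_t and w_t are made. -/
open MeasureTheory ProbabilityTheory
open scoped ENNReal


def traceSpace {Ω : Type*} (H : MeasurableSpace Ω) (C : Set Ω) (hC : MeasurableSet[H] C) :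
    MeasurableSpace Ω where
  MeasurableSet' B := MeasurableSet[H] (B ∩ C)
  measurableSet_empty := by simp
  measurableSet_compl := by
    intro s hs
    have : sᶜ ∩ C = C \ (s ∩ C) := by ext x; simp; tauto
    rw [this]
    exact hC.diff hs
  measurableSet_iUnion := by
    intro f hf
    rw [Set.iUnion_inter]
    exact MeasurableSet.iUnion hf

lemma measurable_eval_idx {Ω : Type*} {m0 : MeasurableSpace Ω} {n : ℕ} (A : Fin n → Ω → ℝ)
    (hA : ∀ i, Measurable (A i)) (p : Ω → Fin n) (hp : Measurable p) :
    Measurable (fun ω => A (p ω) ω) := by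
  have h : Measurable (fun q : Fin n × Ω => A q.1 q.2) :=
    measurable_from_prod_countable_right hA
  exact h.comp (hp.prodMk measurable_id)

/-- restriction to an event on which `m` is contained in `H` -/
lemma indicator_meas {Ω : Type*} (H m : MeasurableSpace Ω) (D : Set Ω)
    (hD : MeasurableSet[H] D) (h : ∀ B, MeasurableSet[m] B → MeasurableSet[H] (B ∩ D))
    (f : Ω → ℝ≥0∞) (hf : Measurable[m] f) : Measurable[H] (D.indicator f) := by
  intro s hs
  rw [Set.indicator_preimage]
  unfold Set.ite
  refine MeasurableSet.union (h _ (hf hs)) (MeasurableSet.diff ?_ hD)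
  exact (@measurable_const _ _ _ H (0 : ℝ≥0∞)) hs

lemma one_idx {Ω : Type*} {m0 : MeasurableSpace Ω} (P : Measure Ω) [IsProbabilityMeasure P]
    (H K m : MeasurableSpace Ω) (hH : H ≤ m0) (hK : K ≤ m0) (hm : m ≤ m0) (hi : Indep H K P)
    (D E : Set Ω) (hDm : MeasurableSet[m] D)
    (hD : MeasurableSet[H] D) (h : ∀ B, MeasurableSet[m] B → MeasurableSet[H] (B ∩ D))
    (hE : MeasurableSet[K] E) (u : ℝ) (hu : u ∈ Set.Ioo (0:ℝ) 1) (hPE : P E = ENNReal.ofReal u)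
    (g : Ω → ℝ≥0∞) (hg : Measurable[m] g) (w : Ω → ℝ) (hw : Measurable[m] w)
    (hwb : ∀ᵐ ω ∂P, ω ∈ D → w ω ∈ Set.Icc (-(u / (1 - u))) 1)
    (F : Ω → ℝ) (hF1 : ∀ ω ∈ D, ω ∈ E → F ω = 1 + w ω * (1 / u - 1))
    (hF0 : ∀ ω ∈ D, ω ∉ E → F ω = 1 - w ω) :
    ∫⁻ ω in D, g ω * ENNReal.ofReal (F ω) ∂P = ∫⁻ ω in D, g ω ∂P := by
  obtain ⟨hu0, hu1⟩ := hu
  have hPEc : P Eᶜ = ENNReal.ofReal (1 - u) := by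
    rw [prob_compl_eq_one_sub (hK _ hE), hPE, ENNReal.ofReal_sub _ hu0.le, ENNReal.ofReal_one]
  let a : Ω → ℝ≥0∞ := fun ω => g ω * ENNReal.ofReal (1 + w ω * (1 / u - 1))
  let b : Ω → ℝ≥0∞ := fun ω => g ω * ENNReal.ofReal (1 - w ω)
  have ha : Measurable[m] a := hg.mul (((hw.mul_const _).const_add _).ennreal_ofReal)
  have hb : Measurable[m] b := hg.mul ((hw.const_sub _).ennreal_ofReal)
  have key : ∀ f : Ω → ℝ≥0∞, Measurable[m] f → ∀ E', MeasurableSet[K] E' →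
      ∫⁻ ω, D.indicator f ω * E'.indicator (fun _ => 1) ω ∂P = (∫⁻ ω in D, f ω ∂P) * P E' := by
    intro f hf E' hE'
    have h1 := lintegral_mul_eq_lintegral_mul_lintegral_of_independent_measurableSpace hH hK hi
      (indicator_meas H m D hD h f hf)
      (Measurable.indicator (@measurable_const _ _ _ K (1 : ℝ≥0∞)) hE')
    rw [h1, lintegral_indicator (hm _ hDm), lintegral_indicator (hK _ hE')]
    simp
  have hai := (indicator_meas H m D hD h a ha).mono hH le_rfl
  have hEi : Measurable[m0] (E.indicator (fun _ => (1:ℝ≥0∞))) :=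
    (@measurable_const _ _ _ m0 (1 : ℝ≥0∞)).indicator (hK _ hE)
  have haE : Measurable[m0] (fun ω => D.indicator a ω * E.indicator (fun _ => (1:ℝ≥0∞)) ω) :=
    hai.mul hEi
  calc ∫⁻ ω in D, g ω * ENNReal.ofReal (F ω) ∂P
      = ∫⁻ ω, (D.indicator a ω * E.indicator (fun _ => 1) ω
          + D.indicator b ω * Eᶜ.indicator (fun _ => 1) ω) ∂P := by
        rw [← lintegral_indicator (hm _ hDm)]
        congr 1
        ext ω
        by_cases hd : ω ∈ D <;> by_cases he : ω ∈ E
        · simp [hd, he, a, hF1 ω hd he]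
        · simp [hd, he, b, hF0 ω hd he]
        · simp [hd]
        · simp [hd]
    _ = (∫⁻ ω in D, a ω ∂P) * P E + (∫⁻ ω in D, b ω ∂P) * P Eᶜ := by
        rw [lintegral_add_left haE, key a ha E hE, key b hb Eᶜ hE.compl]
    _ = ∫⁻ ω in D, (a ω * P E + b ω * P Eᶜ) ∂P := by
        rw [lintegral_add_left ((ha.mono hm le_rfl).mul_const _),
          lintegral_mul_const _ (ha.mono hm le_rfl), lintegral_mul_const _ (hb.mono hm le_rfl)]
    _ = ∫⁻ ω in D, g ω ∂P := by
        apply lintegral_congr_ae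
        rw [Filter.EventuallyEq, ae_restrict_iff' (hm _ hDm)]
        filter_upwards [hwb] with ω hω hd
        obtain ⟨h1, h2⟩ := hω hd
        have hp : 0 ≤ 1 + w ω * (1 / u - 1) := by
          have hc : 0 < 1 - u := by linarith
          have h3 : 1 / u - 1 = (1 - u) / u := by field_simp
          rw [h3]
          have h4 : -(u / (1 - u)) * ((1 - u) / u) ≤ w ω * ((1 - u) / u) :=
            mul_le_mul_of_nonneg_right h1 (by positivity)
          have h5 : -(u / (1 - u)) * ((1 - u) / u) = -1 := by field_simp
          linarith
        simp only [a, b, hPE, hPEc]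
        rw [mul_assoc, mul_assoc, ← mul_add, ← ENNReal.ofReal_mul hp,
          ← ENNReal.ofReal_mul (by linarith), ← ENNReal.ofReal_add (mul_nonneg hp hu0.le)
          (mul_nonneg (by linarith) (by linarith))]
        have : (1 + w ω * (1 / u - 1)) * u + (1 - w ω) * (1 - u) = 1 := by field_simp; ring
        rw [this]; simp

/-- **Type-I error control of the i-bet test.**
Under the global causal null (the treatment assignments `A i` are independent `{0,1}`-valued
random variables with `P(A i = 1) = μ i`, jointly independent of the σ-algebra `𝒢` of
outcomes and covariates), for every `α ∈ (0,1)` the i-bet test controls the type-I error: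
`P(∃ t ∈ {1,…,n − |I₀|}, M t ≥ 1/α) ≤ α`, regardless of how the predictable choices
`π t` and `w t` are made. -/
theorem ibet_type_one_error_control
    {Ω : Type*} {m0 : MeasurableSpace Ω} (P : Measure Ω) [IsProbabilityMeasure P]
    (n : ℕ) (μ : Fin n → ℝ) (hμ : ∀ i, μ i ∈ Set.Ioo (0:ℝ) 1)
    -- the treatment assignments
    (A : Fin n → Ω → ℝ) (hAmeas : ∀ i, Measurable (A i))
    (hA01 : ∀ i ω, A i ω = 0 ∨ A i ω = 1)
    (hA1 : ∀ i, P {ω | A i ω = 1} = ENNReal.ofReal (μ i))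
    -- the σ-algebra generated by all outcomes and covariates
    (𝒢 : MeasurableSpace Ω) (h𝒢 : 𝒢 ≤ m0)
    -- global causal null: the `A i` are mutually independent and the vector `(A 1, …, A n)`
    -- is independent of `𝒢`
    (hindep : iIndep (fun j : Option (Fin n) =>
        j.elim 𝒢 (fun i => MeasurableSpace.comap (A i) inferInstance)) P)
    -- the initially revealed holdout set
    (I₀ : Finset (Fin n))
    -- the interactively chosen ordering `π`, the revealed sets `I t`, and the filtration `ℱ`
    (π : ℕ → Ω → Fin n) (I : ℕ → Ω → Finset (Fin n)) (ℱ : ℕ → MeasurableSpace Ω)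
    (hI0 : ∀ ω, I 0 ω = I₀)
    (hIsucc : ∀ t, t + 1 ≤ n - I₀.card → ∀ ω, I (t+1) ω = insert (π (t+1) ω) (I t ω))
    (hℱ0 : ℱ 0 = 𝒢 ⊔ ⨆ i ∈ I₀, MeasurableSpace.comap (A i) inferInstance)
    (hℱsucc : ∀ t, t + 1 ≤ n - I₀.card → ℱ (t+1) = ℱ t ⊔
        MeasurableSpace.comap (fun ω => A (π (t+1) ω) ω) inferInstance)
    -- `π (t+1)` is `ℱ t`-measurable with values outside the already revealed set
    (hπmeas : ∀ t, t + 1 ≤ n - I₀.card → Measurable[ℱ t] (π (t+1)))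
    (hπnew : ∀ t, t + 1 ≤ n - I₀.card → ∀ ω, π (t+1) ω ∉ I t ω)
    -- the predictable bets
    (w : ℕ → Ω → ℝ)
    (hwmeas : ∀ t, t + 1 ≤ n - I₀.card → Measurable[ℱ t] (w (t+1)))
    (hw : ∀ t, t + 1 ≤ n - I₀.card → ∀ᵐ ω ∂P, w (t+1) ω ∈
        Set.Icc (-(μ (π (t+1) ω) / (1 - μ (π (t+1) ω)))) 1)
    -- the wealth process
    (M : ℕ → Ω → ℝ)
    (hM : ∀ t, t ≤ n - I₀.card → ∀ ω, M t ω = ∏ j ∈ Finset.range t,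
        (1 + w (j+1) ω * (A (π (j+1) ω) ω / μ (π (j+1) ω) - 1)))
    (α : ℝ) (hα : α ∈ Set.Ioo (0:ℝ) 1) :
    P {ω | ∃ t, 1 ≤ t ∧ t ≤ n - I₀.card ∧ 1/α ≤ M t ω} ≤ ENNReal.ofReal α := by
  classical
  set T := n - I₀.card with hT
  let H : Fin n → MeasurableSpace Ω := fun i => ⨆ j ∈ ({some i}ᶜ : Set (Option (Fin n))),
    (j.elim 𝒢 (fun i => MeasurableSpace.comap (A i) inferInstance))
  let K : Fin n → MeasurableSpace Ω := fun i => MeasurableSpace.comap (A i) inferInstance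
  have hK : ∀ i, K i ≤ m0 := fun i => (hAmeas i).comap_le
  have hle : ∀ j : Option (Fin n), (j.elim 𝒢 (fun i => MeasurableSpace.comap (A i) inferInstance)) ≤ m0 := by
    rintro (_ | i)
    · exact h𝒢
    · exact hK i
  have hH : ∀ i, H i ≤ m0 := fun i => iSup₂_le fun j _ => hle j
  have hHK : ∀ i, Indep (H i) (K i) P := by
    intro i
    have := indep_iSup_of_disjoint hle hindep (S := {some i}ᶜ) (T := {some i})
      disjoint_compl_left
    simpa [H, K] using this
  have hGH : ∀ i, 𝒢 ≤ H i := fun i => le_iSup₂_of_le (f := fun (j : Option (Fin n)) (_ : j ∈ ({some i}ᶜ : Set (Option (Fin n)))) => (j.elim 𝒢 (fun i => MeasurableSpace.comap (A i) inferInstance))) none (by simp) le_rfl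
  have hKH : ∀ i j, j ≠ i → K j ≤ H i := fun i j hj => le_iSup₂_of_le (f := fun (j : Option (Fin n)) (_ : j ∈ ({some i}ᶜ : Set (Option (Fin n)))) => (j.elim 𝒢 (fun i => MeasurableSpace.comap (A i) inferInstance))) (some j) (by simpa using hj) le_rfl
  have hmono : ∀ t, t + 1 ≤ T → ℱ t ≤ ℱ (t+1) := fun t ht => by
    rw [hℱsucc t ht]; exact le_sup_left
  have hℱ : ∀ t, t ≤ T → ℱ t ≤ m0 := by
    intro t
    induction t with
    | zero =>
      intro _
      rw [hℱ0]
      exact sup_le h𝒢 (iSup₂_le fun i _ => hK i)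
    | succ t ih =>
      intro ht
      rw [hℱsucc t ht]
      refine sup_le (ih (by omega)) (Measurable.comap_le ?_)
      exact measurable_eval_idx A hAmeas _ ((hπmeas t ht).mono (ih (by omega)) le_rfl)
  -- the trace property
  have htr : ∀ i t, t ≤ T → ∀ B, MeasurableSet[ℱ t] B → MeasurableSet[H i] (B ∩ {ω | i ∉ I t ω}) := by
    intro i t
    induction t with
    | zero =>
      intro _ B hB
      by_cases hi : i ∈ I₀
      · simp [hI0, hi]
      · have : ℱ 0 ≤ H i := by
          rw [hℱ0]
          refine sup_le (hGH i) (iSup₂_le fun j hj => hKH i j ?_)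
          rintro rfl; exact hi hj
        simpa [hI0, hi] using this _ hB
    | succ t ih =>
      intro ht
      have ih := ih (by omega)
      have hCeq : {ω | i ∉ I (t+1) ω} = {ω | π (t+1) ω ≠ i} ∩ {ω | i ∉ I t ω} := by
        ext ω
        simp [hIsucc t ht ω, eq_comm]
      have hpj : ∀ S : Set (Fin n), MeasurableSet[ℱ t] (π (t+1) ⁻¹' S) := fun S =>
        hπmeas t ht (MeasurableSet.of_discrete)
      have hC : MeasurableSet[H i] {ω | i ∉ I (t+1) ω} := by
        rw [hCeq]; exact ih _ (hpj {i}ᶜ)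
      have hsub : ℱ (t+1) ≤ traceSpace (H i) {ω | i ∉ I (t+1) ω} hC := by
        rw [hℱsucc t ht]
        refine sup_le ?_ ?_
        · intro B hB
          change MeasurableSet[H i] (B ∩ _)
          rw [hCeq, ← Set.inter_assoc]
          exact ih _ (hB.inter (hpj {i}ᶜ))
        · rintro B ⟨s, hs, rfl⟩
          change MeasurableSet[H i] (_ ∩ _)
          have : ((fun ω => A (π (t+1) ω) ω) ⁻¹' s) ∩ {ω | i ∉ I (t+1) ω} =
              ⋃ j ∈ ({i}ᶜ : Set (Fin n)), (A j ⁻¹' s) ∩ (π (t+1) ⁻¹' {j} ∩ {ω | i ∉ I t ω}) := by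
            rw [hCeq]
            ext ω
            simp only [Set.mem_inter_iff, Set.mem_preimage, Set.mem_setOf_eq, Set.mem_iUnion,
              Set.mem_compl_iff, Set.mem_singleton_iff, exists_prop]
            constructor
            · rintro ⟨h1, h2, h3⟩
              exact ⟨_, h2, h1, rfl, h3⟩
            · rintro ⟨j, h2, h1, rfl, h3⟩
              exact ⟨h1, h2, h3⟩
          rw [this]
          refine MeasurableSet.biUnion (Set.to_countable _) fun j hj => ?_
          refine MeasurableSet.inter ?_ (ih _ (hpj {j}))
          exact hKH i j hj _ ⟨s, hs, rfl⟩
      exact hsub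
  let F : ℕ → Ω → ℝ := fun t ω => 1 + w (t+1) ω * (A (π (t+1) ω) ω / μ (π (t+1) ω) - 1)
  have hM0 : ∀ ω, M 0 ω = 1 := fun ω => by simp [hM 0 (by omega) ω]
  have hMs : ∀ t, t + 1 ≤ T → ∀ ω, M (t+1) ω = M t ω * F t ω := fun t ht ω => by
    rw [hM (t+1) ht, hM t (by omega), Finset.prod_range_succ]
  have hFmeas : ∀ t, t + 1 ≤ T → Measurable[ℱ (t+1)] (F t) := by
    intro t ht
    have h1 : Measurable[ℱ (t+1)] (w (t+1)) := (hwmeas t ht).mono (hmono t ht) le_rfl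
    have h2 : Measurable[ℱ (t+1)] (π (t+1)) := (hπmeas t ht).mono (hmono t ht) le_rfl
    have h3 : Measurable[ℱ (t+1)] (fun ω => A (π (t+1) ω) ω) := by
      rw [measurable_iff_comap_le, hℱsucc t ht]; exact le_sup_right
    have h4 : Measurable[ℱ (t+1)] (fun ω => μ (π (t+1) ω)) :=
      (measurable_of_countable μ).comp h2
    exact (h1.mul ((h3.div h4).sub_const 1)).const_add 1
  have hMmeas : ∀ t, t ≤ T → Measurable[ℱ t] (M t) := by
    intro t
    induction t with
    | zero =>
      intro _
      rw [funext hM0]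
      exact @measurable_const _ _ _ (ℱ 0) _
    | succ t ih =>
      intro ht
      rw [funext (hMs t ht)]
      exact ((ih (by omega)).mono (hmono t ht) le_rfl).mul (hFmeas t ht)
  have hFnn : ∀ t, t + 1 ≤ T → ∀ᵐ ω ∂P, 0 ≤ F t ω := by
    intro t ht
    filter_upwards [hw t ht] with ω hω
    obtain ⟨h1, h2⟩ := hω
    obtain ⟨hu0, hu1⟩ := hμ (π (t+1) ω)
    simp only [F]
    rcases hA01 (π (t+1) ω) ω with h | h
    · rw [h]; simp; exact h2
    · rw [h]
      generalize μ (π (t+1) ω) = u at *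
      have hc : 0 < 1 - u := by linarith
      have h3 : 1 / u - 1 = (1 - u) / u := by field_simp
      rw [h3]
      have h4 : -(u / (1 - u)) * ((1 - u) / u) ≤ w (t+1) ω * ((1 - u) / u) :=
        mul_le_mul_of_nonneg_right h1 (by positivity)
      have h5 : -(u / (1 - u)) * ((1 - u) / u) = -1 := by field_simp
      linarith
  -- one step fairness
  have hstep : ∀ t, t + 1 ≤ T → ∀ g : Ω → ℝ≥0∞, Measurable[ℱ t] g →
      ∫⁻ ω, g ω * ENNReal.ofReal (F t ω) ∂P = ∫⁻ ω, g ω ∂P := by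
    intro t ht g hg
    have hpm : ∀ i, MeasurableSet[ℱ t] (π (t+1) ⁻¹' {i}) := fun i =>
      hπmeas t ht (MeasurableSet.of_discrete)
    have hun : (⋃ i, π (t+1) ⁻¹' {i}) = Set.univ := by ext ω; simp
    have hdis : Pairwise (Function.onFun Disjoint fun i => π (t+1) ⁻¹' {i}) := by
      intro i j hij
      exact Disjoint.preimage _ (by simpa using hij)
    have hsplit : ∀ f : Ω → ℝ≥0∞, ∫⁻ ω, f ω ∂P = ∑' i, ∫⁻ ω in π (t+1) ⁻¹' {i}, f ω ∂P := by
      intro f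
      rw [← lintegral_iUnion (fun i => hℱ t (by omega) _ (hpm i)) hdis, hun, setLIntegral_univ]
    rw [hsplit, hsplit g]
    congr 1
    ext i
    have htrD : ∀ B, MeasurableSet[ℱ t] B → MeasurableSet[H i] (B ∩ π (t+1) ⁻¹' {i}) := by
      intro B hB
      have := htr i t (by omega) _ (hB.inter (hpm i))
      have he : B ∩ π (t+1) ⁻¹' {i} ∩ {ω | i ∉ I t ω} = B ∩ π (t+1) ⁻¹' {i} := by
        apply Set.inter_eq_left.2
        rintro ω ⟨_, h⟩
        have := hπnew t ht ω
        simp only [Set.mem_preimage, Set.mem_singleton_iff] at h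
        rwa [h] at this
      rwa [he] at this
    refine one_idx P (H i) (K i) (ℱ t) (hH i) (hK i) (hℱ t (by omega)) (hHK i)
      (π (t+1) ⁻¹' {i}) {ω | A i ω = 1} (hpm i) ?_ htrD ?_ (μ i) (hμ i) (hA1 i) g hg
      (w (t+1)) (hwmeas t ht) ?_ (F t) ?_ ?_
    · simpa using htrD Set.univ MeasurableSet.univ
    · exact ⟨{1}, measurableSet_singleton _, rfl⟩
    · filter_upwards [hw t ht] with ω hω hd
      have hd : π (t+1) ω = i := hd
      rwa [hd] at hω
    · intro ω hd he
      have hd : π (t+1) ω = i := hd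
      have he : A i ω = 1 := he
      simp only [F, hd, he]
    · intro ω hd he
      have hd : π (t+1) ω = i := hd
      have he : A i ω = 0 := (hA01 i ω).resolve_right he
      simp only [F, hd, he]
      ring
  let C : ℕ → Set Ω := fun t => {ω | ∀ s, 1 ≤ s → s ≤ t → M s ω < 1/α}
  have hC0 : C 0 = Set.univ := by
    ext ω; simp only [C, Set.mem_setOf_eq, Set.mem_univ, iff_true]; intro s h1 h2; omega
  have hCs : ∀ t, C (t+1) = C t ∩ {ω | M (t+1) ω < 1/α} := by
    intro t
    ext ω
    simp only [C, Set.mem_setOf_eq, Set.mem_inter_iff]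
    constructor
    · intro h
      exact ⟨fun s h1 h2 => h s h1 (by omega), h _ (by omega) le_rfl⟩
    · rintro ⟨h, h'⟩ s h1 h2
      rcases Nat.lt_or_ge s (t+1) with h3 | h3
      · exact h s h1 (by omega)
      · obtain rfl : s = t + 1 := by omega
        exact h'
  have hmain : ∀ t, t ≤ T → MeasurableSet[ℱ t] (C t) ∧
      ENNReal.ofReal (1/α) * P (C t)ᶜ + ∫⁻ ω in C t, ENNReal.ofReal (M t ω) ∂P ≤ 1 := by
    intro t
    induction t with
    | zero =>
      intro _
      rw [hC0]
      simp [hM0]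
    | succ t ih =>
      intro ht
      obtain ⟨hCm, hb⟩ := ih (by omega)
      have hm1 : MeasurableSet[ℱ (t+1)] {ω | M (t+1) ω < 1/α} :=
        hMmeas (t+1) ht measurableSet_Iio
      have hCm1 : MeasurableSet[ℱ (t+1)] (C (t+1)) := by
        rw [hCs]; exact (hmono t ht _ hCm).inter hm1
      refine ⟨hCm1, le_trans ?_ hb⟩
      have hCt := hℱ t (by omega) _ hCm
      have hCt1 := hℱ (t+1) ht _ hCm1
      have hm1' := hℱ (t+1) ht _ hm1
      have hfair : ∫⁻ ω in C t, ENNReal.ofReal (M (t+1) ω) ∂P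
          = ∫⁻ ω in C t, ENNReal.ofReal (M t ω) ∂P := by
        have hgm : Measurable[ℱ t] ((C t).indicator fun ω => ENNReal.ofReal (M t ω)) :=
          ((hMmeas t (by omega)).ennreal_ofReal).indicator hCm
        have := hstep t ht _ hgm
        rw [← lintegral_indicator hCt, ← lintegral_indicator hCt, ← this]
        apply lintegral_congr_ae
        filter_upwards [hFnn t ht] with ω hω
        by_cases h : ω ∈ C t
        · simp only [Set.indicator_of_mem h]
          rw [hMs t ht, ENNReal.ofReal_mul' hω]
        · simp [Set.indicator_of_notMem h]
      have hsp : ∫⁻ ω in C t, ENNReal.ofReal (M (t+1) ω) ∂P =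
          ∫⁻ ω in C (t+1), ENNReal.ofReal (M (t+1) ω) ∂P +
          ∫⁻ ω in C t \ {ω | M (t+1) ω < 1/α}, ENNReal.ofReal (M (t+1) ω) ∂P := by
        rw [hCs, lintegral_inter_add_diff _ _ hm1']
      have hlow : ENNReal.ofReal (1/α) * P (C t \ {ω | M (t+1) ω < 1/α}) ≤
          ∫⁻ ω in C t \ {ω | M (t+1) ω < 1/α}, ENNReal.ofReal (M (t+1) ω) ∂P := by
        rw [← setLIntegral_const]
        refine setLIntegral_mono' (hCt.diff hm1') fun ω hω => ENNReal.ofReal_le_ofReal ?_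
        exact not_lt.1 hω.2
      have hcomp : P (C (t+1))ᶜ ≤ P (C t)ᶜ + P (C t \ {ω | M (t+1) ω < 1/α}) := by
        refine (measure_mono ?_).trans (measure_union_le _ _)
        rw [hCs]
        intro ω hω
        by_cases h : ω ∈ C t
        · exact Or.inr ⟨h, fun h' => hω ⟨h, h'⟩⟩
        · exact Or.inl h
      rw [← hfair, hsp]
      calc ENNReal.ofReal (1/α) * P (C (t+1))ᶜ + ∫⁻ ω in C (t+1), ENNReal.ofReal (M (t+1) ω) ∂P
          ≤ ENNReal.ofReal (1/α) * (P (C t)ᶜ + P (C t \ {ω | M (t+1) ω < 1/α}))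
            + ∫⁻ ω in C (t+1), ENNReal.ofReal (M (t+1) ω) ∂P := by gcongr
        _ ≤ (ENNReal.ofReal (1/α) * P (C t)ᶜ
            + ∫⁻ ω in C t \ {ω | M (t+1) ω < 1/α}, ENNReal.ofReal (M (t+1) ω) ∂P)
            + ∫⁻ ω in C (t+1), ENNReal.ofReal (M (t+1) ω) ∂P := by
          rw [mul_add]; gcongr
        _ = _ := by ring
  have hset : {ω | ∃ t, 1 ≤ t ∧ t ≤ T ∧ 1/α ≤ M t ω} = (C T)ᶜ := by
    ext ω
    simp only [C, Set.mem_setOf_eq, Set.mem_compl_iff]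
    push Not
    rfl
  rw [hset]
  have hfin := le_trans le_self_add (hmain T le_rfl).2
  have hα0 := hα.1
  calc P (C T)ᶜ = ENNReal.ofReal α * (ENNReal.ofReal (1/α) * P (C T)ᶜ) := by
        rw [← mul_assoc, ← ENNReal.ofReal_mul hα0.le, mul_one_div_cancel hα0.ne']
        simp
    _ ≤ ENNReal.ofReal α * 1 := by gcongr
    _ = _ := mul_one _
end

section
/- Under the global causal null, the type-I error control of the i-bet test holds conditionally on the outcomes and covariates: for every α ∈ (0,1), P(∃ t ∈ {1,…,n−|I_0|} : M_t ≥ 1/α | 𝒢) ≤ α almost surely. -/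
open MeasureTheory ProbabilityTheory
open scoped ENNReal

/-- trace-type sigma algebra -/
@[reducible]
def ibetTrace {Ω : Type*} (H : MeasurableSpace Ω) (S : Set Ω) (hS : MeasurableSet[H] S) :
    MeasurableSpace Ω where
  MeasurableSet' E := MeasurableSet[H] (E ∩ S)
  measurableSet_empty := by simp
  measurableSet_compl E hE := by
    have : Eᶜ ∩ S = S \ (E ∩ S) := by ext; simp; tauto
    rw [this]; exact hS.diff hE
  measurableSet_iUnion f hf := by
    rw [Set.iUnion_inter]; exact MeasurableSet.iUnion hf

lemma ibet_indicator {Ω : Type*} {F H : MeasurableSpace Ω} {S : Set Ω}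
    (hSF : MeasurableSet[F] S) (h : ∀ E, MeasurableSet[F] E → E ⊆ S → MeasurableSet[H] E)
    {f : Ω → ℝ≥0∞} (hf : Measurable[F] f) : Measurable[H] (S.indicator f) := by
  have hSH := h S hSF subset_rfl
  intro B hB
  have e : (S.indicator f) ⁻¹' B = ((f ⁻¹' B) ∩ S) ∪ (Sᶜ ∩ {_ω | (0:ℝ≥0∞) ∈ B}) := by
    ext ω
    by_cases hs : ω ∈ S <;> simp [hs]
  rw [e]
  exact (h _ ((hf hB).inter hSF) Set.inter_subset_right).union (hSH.compl.inter (.const _))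

/-- one-step -/
lemma ibet_step {Ω : Type*} {F H : MeasurableSpace Ω} {m0 : MeasurableSpace Ω} (P : Measure Ω)
    [IsProbabilityMeasure P] (hF : F ≤ m0) (hH : H ≤ m0) {S : Set Ω}
    (hSF : MeasurableSet[F] S) (h : ∀ E, MeasurableSet[F] E → E ⊆ S → MeasurableSet[H] E)
    {μ : ℝ} (hμ : μ ∈ Set.Ioo (0:ℝ) 1) {A : Ω → ℝ} (hA : Measurable A)
    (hA01 : ∀ ω, A ω = 0 ∨ A ω = 1) (hA1 : P {ω | A ω = 1} = ENNReal.ofReal μ)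
    (hind : Indep H (MeasurableSpace.comap A inferInstance) P)
    {w X : Ω → ℝ} (hw : Measurable[F] w) (hX : Measurable[F] X)
    (hwb : ∀ᵐ ω ∂P, ω ∈ S → w ω ∈ Set.Icc (-(μ / (1 - μ))) 1) :
    ∫⁻ ω in S, ENNReal.ofReal (X ω * (1 + w ω * (A ω / μ - 1))) ∂P
      = ∫⁻ ω in S, ENNReal.ofReal (X ω) ∂P := by
  obtain ⟨h0, h1⟩ := hμ
  have hS0 := hF _ hSF
  have hA0 : P {ω | A ω = 0} = ENNReal.ofReal (1 - μ) := by
    have : {ω | A ω = 0} = {ω | A ω = 1}ᶜ := by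
      ext ω; rcases hA01 ω with h | h <;> simp [h]
    have hm : MeasurableSet {ω | A ω = 1} := hA (measurableSet_singleton 1)
    rw [this, prob_compl_eq_one_sub hm, hA1,
      ENNReal.ofReal_sub _ h0.le, ENNReal.ofReal_one]
  have key : ∀ (c : ℝ) (f : Ω → ℝ≥0∞), Measurable[F] f →
      ∫⁻ ω, S.indicator f ω * ({ω | A ω = c}.indicator (fun _ => 1) ω) ∂P
        = (∫⁻ ω, S.indicator f ω ∂P) * P {ω | A ω = c} := by
    intro c f hf
    have hc : MeasurableSet {ω | A ω = c} := hA (measurableSet_singleton c)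
    have := lintegral_mul_indicator_eq_lintegral_mul_lintegral_indicator
      (μ := P) (T := {ω | A ω = c}) (Mf := H) (c := 1) hH hc
      (by
        rw [IndepSets_iff]
        rintro a b ha rfl
        exact (Indep_iff _ _ _).1 hind a _ ha ⟨{c}, measurableSet_singleton c, rfl⟩) (ibet_indicator hSF h hf)
    rw [this]
    congr 1
    rw [lintegral_indicator hc]; simp
  have f1m : Measurable[F] fun ω => ENNReal.ofReal (X ω * (1 + w ω * (1 / μ - 1))) := by
    fun_prop
  have f0m : Measurable[F] fun ω => ENNReal.ofReal (X ω * (1 - w ω)) := by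
    fun_prop
  have k1 := key 1 _ f1m
  have k0 := key 0 _ f0m
  have m1 := f1m.mono hF le_rfl
  have m0' := f0m.mono hF le_rfl
  rw [← lintegral_indicator hS0, ← lintegral_indicator hS0]
  calc _ = ∫⁻ ω, (S.indicator (fun ω => ENNReal.ofReal (X ω * (1 + w ω * (1 / μ - 1)))) ω
            * ({ω | A ω = 1}.indicator (fun _ => 1) ω) +
          S.indicator (fun ω => ENNReal.ofReal (X ω * (1 - w ω))) ω
            * ({ω | A ω = 0}.indicator (fun _ => 1) ω)) ∂P := by
        refine lintegral_congr fun ω => ?_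
        by_cases hs : ω ∈ S
        · rcases hA01 ω with h | h <;> simp [hs, h, sub_eq_add_neg]
        · simp [hs]
    _ = (∫⁻ ω, S.indicator (fun ω => ENNReal.ofReal (X ω * (1 + w ω * (1 / μ - 1)))) ω ∂P)
            * ENNReal.ofReal μ +
          (∫⁻ ω, S.indicator (fun ω => ENNReal.ofReal (X ω * (1 - w ω))) ω ∂P)
            * ENNReal.ofReal (1 - μ) := by
        rw [lintegral_add_left, k1, k0, hA1, hA0]
        exact (m1.indicator hS0).mul (measurable_const.indicator (hA (measurableSet_singleton 1)))
    _ = _ := by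
        rw [← lintegral_mul_const _ (m1.indicator hS0), ← lintegral_mul_const _ (m0'.indicator hS0),
          ← lintegral_add_left ((m1.indicator hS0).mul_const _)]
        refine lintegral_congr_ae ?_
        filter_upwards [hwb] with ω hω
        by_cases hs : ω ∈ S
        · obtain ⟨a, b⟩ := hω hs
          have p1 : 0 ≤ 1 + w ω * (1 / μ - 1) := by
            have e : 1 / μ - 1 = (1 - μ) / μ := by field_simp
            have : -(μ / (1 - μ)) * ((1 - μ) / μ) = -1 := by
              have : 1 - μ ≠ 0 := by linarith
              field_simp
            have q : 0 ≤ (1 - μ) / μ := div_nonneg (by linarith) h0.le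
            rw [e]
            nlinarith [mul_le_mul_of_nonneg_right a q]
          have p0 : 0 ≤ 1 - w ω := by linarith
          simp only [hs, Set.indicator_of_mem]
          rw [ENNReal.ofReal_mul' p1, ENNReal.ofReal_mul' p0, mul_assoc, mul_assoc, ← mul_add,
            ← ENNReal.ofReal_mul p1, ← ENNReal.ofReal_mul p0, ← ENNReal.ofReal_add]
          · have : (1 + w ω * (1 / μ - 1)) * μ + (1 - w ω) * (1 - μ) = 1 := by
              field_simp; ring
            rw [this]; simp
          · positivity
          · exact mul_nonneg p0 (by linarith)
        · simp [hs]

lemma ibet_ville {Ω : Type*} (ℱ : ℕ → MeasurableSpace Ω) {m0 : MeasurableSpace Ω} (P : Measure Ω)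
    [IsProbabilityMeasure P] (N : ℕ) (hle : ∀ t ≤ N, ℱ t ≤ m0)
    (hmono : ∀ t, t + 1 ≤ N → ℱ t ≤ ℱ (t+1)) (M : ℕ → Ω → ℝ)
    (hMm : ∀ t ≤ N, Measurable[ℱ t] (M t)) (hM0 : ∀ ω, M 0 ω = 1)
    (hstep : ∀ t, t + 1 ≤ N → ∀ E, MeasurableSet[ℱ t] E →
      ∫⁻ ω in E, ENNReal.ofReal (M (t+1) ω) ∂P = ∫⁻ ω in E, ENNReal.ofReal (M t ω) ∂P)
    (c : ℝ) (G : Set Ω) (hG : MeasurableSet[ℱ 0] G) :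
    MeasurableSet {ω | ∃ t, 1 ≤ t ∧ t ≤ N ∧ c ≤ M t ω} ∧
    ENNReal.ofReal c * P (G ∩ {ω | ∃ t, 1 ≤ t ∧ t ≤ N ∧ c ≤ M t ω}) ≤ P G := by
  set K : ℕ → Set Ω := fun k => {ω | ∃ t, 1 ≤ t ∧ t ≤ k ∧ c ≤ M t ω} with hK
  have hGt : ∀ t ≤ N, MeasurableSet[ℱ t] G := by
    intro t
    induction t with
    | zero => intro _; exact hG
    | succ t ih => intro h; exact hmono t h _ (ih (by omega))
  have hKs : ∀ t, K (t+1) = K t ∪ {ω | c ≤ M (t+1) ω} := by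
    intro t
    ext ω
    simp only [hK, Set.mem_setOf_eq, Set.mem_union]
    constructor
    · rintro ⟨s, h1, h2, h3⟩
      rcases Nat.lt_or_ge s (t+1) with h | h
      · exact Or.inl ⟨s, h1, by omega, h3⟩
      · obtain rfl : s = t + 1 := by omega
        exact Or.inr h3
    · rintro (⟨s, h1, h2, h3⟩ | h)
      · exact ⟨s, h1, by omega, h3⟩
      · exact ⟨t+1, by omega, le_rfl, h⟩
  have hcM : ∀ t ≤ N, MeasurableSet[ℱ t] {ω | c ≤ M t ω} := fun t ht =>
    hMm t ht measurableSet_Ici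
  have hKm : ∀ t ≤ N, MeasurableSet[ℱ t] (K t) := by
    intro t
    induction t with
    | zero =>
      intro _
      have : K 0 = ∅ := by
        ext ω; simp only [hK, Set.mem_setOf_eq, Set.mem_empty_iff_false, iff_false]
        rintro ⟨s, h1, h2, _⟩; omega
      rw [this]; exact @MeasurableSet.empty _ (ℱ 0)
    | succ t ih =>
      intro h
      rw [hKs]
      exact @MeasurableSet.union _ (ℱ (t+1)) _ _ (hmono t h _ (ih (by omega))) (hcM _ h)
  have main : ∀ t ≤ N, ∫⁻ ω in G ∩ (K t)ᶜ, ENNReal.ofReal (M t ω) ∂P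
      + ENNReal.ofReal c * P (G ∩ K t) ≤ P G := by
    intro t
    induction t with
    | zero =>
      intro _
      have : K 0 = ∅ := by
        ext ω; simp only [hK, Set.mem_setOf_eq, Set.mem_empty_iff_false, iff_false]
        rintro ⟨s, h1, h2, _⟩; omega
      simp [this, hM0]
    | succ t ih =>
      intro h
      refine le_trans ?_ (ih (by omega))
      have hE : MeasurableSet[ℱ t] (G ∩ (K t)ᶜ) :=
        @MeasurableSet.inter _ (ℱ t) _ _ (hGt t (by omega))
          (@MeasurableSet.compl _ _ (ℱ t) (hKm t (by omega)))
      rw [← hstep t h _ hE]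
      have hC : MeasurableSet {ω | c ≤ M (t+1) ω} := hle _ h _ (hcM _ h)
      have hG0 : MeasurableSet G := hle _ h _ (hGt _ h)
      have hK0 : MeasurableSet (K t) := hle t (by omega) _ (hKm t (by omega))
      rw [← lintegral_inter_add_diff (μ := P) (fun ω => ENNReal.ofReal (M (t+1) ω))
        (G ∩ (K t)ᶜ) hC]
      have e1 : (G ∩ (K t)ᶜ) \ {ω | c ≤ M (t+1) ω} = G ∩ (K (t+1))ᶜ := by
        rw [hKs]; ext; simp; tauto
      have e2 : G ∩ K (t+1) = (G ∩ K t) ∪ (G ∩ (K t)ᶜ ∩ {ω | c ≤ M (t+1) ω}) := by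
        rw [hKs]; ext; simp; tauto
      rw [e1, e2]
      have b1 := measure_union_le (μ := P) (G ∩ K t) (G ∩ (K t)ᶜ ∩ {ω | c ≤ M (t+1) ω})
      have b2 : ENNReal.ofReal c * P (G ∩ (K t)ᶜ ∩ {ω | c ≤ M (t+1) ω}) ≤
          ∫⁻ ω in (G ∩ (K t)ᶜ) ∩ {ω | c ≤ M (t+1) ω}, ENNReal.ofReal (M (t+1) ω) ∂P := by
        rw [← setLIntegral_const]
        refine setLIntegral_mono' ((hG0.inter hK0.compl).inter hC) ?_
        rintro ω ⟨_, hω⟩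
        exact ENNReal.ofReal_le_ofReal hω
      calc _ ≤ ∫⁻ ω in G ∩ (K (t+1))ᶜ, ENNReal.ofReal (M (t+1) ω) ∂P + ENNReal.ofReal c *
            (P (G ∩ K t) + P (G ∩ (K t)ᶜ ∩ {ω | c ≤ M (t+1) ω})) := by gcongr
        _ = ENNReal.ofReal c * P (G ∩ (K t)ᶜ ∩ {ω | c ≤ M (t+1) ω}) +
            ∫⁻ ω in G ∩ (K (t+1))ᶜ, ENNReal.ofReal (M (t+1) ω) ∂P +
              ENNReal.ofReal c * P (G ∩ K t) := by ring
        _ ≤ _ := by gcongr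
  exact ⟨hle N le_rfl _ (hKm N le_rfl), le_trans le_add_self (main N le_rfl)⟩

lemma ibet_struct {Ω : Type*} (𝒢 : MeasurableSpace Ω) (n N : ℕ)
    (A : Fin n → Ω → ℝ) (I₀ : Finset (Fin n))
    (π : ℕ → Ω → Fin n) (I : ℕ → Ω → Finset (Fin n)) (ℱ : ℕ → MeasurableSpace Ω)
    (hI0 : ∀ ω, I 0 ω = I₀)
    (hIsucc : ∀ t, t + 1 ≤ N → ∀ ω, I (t+1) ω = insert (π (t+1) ω) (I t ω))
    (hℱ0 : ℱ 0 = 𝒢 ⊔ ⨆ i ∈ I₀, MeasurableSpace.comap (A i) inferInstance)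
    (hℱsucc : ∀ t, t + 1 ≤ N → ℱ (t+1) = ℱ t ⊔
        MeasurableSpace.comap (fun ω => A (π (t+1) ω) ω) inferInstance)
    (hπmeas : ∀ t, t + 1 ≤ N → Measurable[ℱ t] (π (t+1)))
    (i : Fin n) (H : MeasurableSpace Ω) (hGH : 𝒢 ≤ H)
    (hAH : ∀ j, j ≠ i → MeasurableSpace.comap (A j) inferInstance ≤ H) :
    ∀ t ≤ N, ∀ E, MeasurableSet[ℱ t] E → MeasurableSet[H] (E ∩ {ω | i ∉ I t ω}) := by
  intro t
  induction t with
  | zero =>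
    intro _ E hE
    by_cases hi : i ∈ I₀
    · have : E ∩ {ω | i ∉ I 0 ω} = ∅ := by ext; simp [hI0, hi]
      rw [this]; exact MeasurableSet.empty
    · have : E ∩ {ω | i ∉ I 0 ω} = E := by ext; simp [hI0, hi]
      rw [this]
      have hle : ℱ 0 ≤ H := by
        rw [hℱ0]
        refine sup_le hGH (iSup₂_le fun j hj => hAH j ?_)
        rintro rfl; exact hi hj
      exact hle _ hE
  | succ t ih =>
    intro h E hE
    have ih := ih (by omega)
    have hne : MeasurableSet[ℱ t] {ω | π (t+1) ω ≠ i} := hπmeas t h (.of_discrete (s := {i}ᶜ))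
    have eS : {ω | i ∉ I (t+1) ω} = {ω | π (t+1) ω ≠ i} ∩ {ω | i ∉ I t ω} := by
      ext ω; simp [hIsucc t h, eq_comm]
    have hS : MeasurableSet[H] {ω | i ∉ I (t+1) ω} := by rw [eS]; exact ih _ hne
    have hle : ℱ (t+1) ≤ ibetTrace H _ hS := by
      rw [hℱsucc t h]
      refine sup_le ?_ ?_
      · intro E hE
        change MeasurableSet[H] (E ∩ {ω | i ∉ I (t+1) ω})
        rw [eS, ← Set.inter_assoc]
        exact ih _ (@MeasurableSet.inter _ (ℱ t) _ _ hE hne)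
      · rintro _ ⟨B, hB, rfl⟩
        change MeasurableSet[H] (_ ∩ {ω | i ∉ I (t+1) ω})
        have : ((fun ω => A (π (t+1) ω) ω) ⁻¹' B) ∩ {ω | i ∉ I (t+1) ω} =
            ⋃ j : {j : Fin n // j ≠ i},
              (((π (t+1)) ⁻¹' {j.1}) ∩ {ω | i ∉ I t ω}) ∩ (A j.1 ⁻¹' B) := by
          rw [eS]; ext ω
          simp only [Set.mem_inter_iff, Set.mem_preimage, Set.mem_setOf_eq, Set.mem_iUnion,
            Set.mem_singleton_iff]
          constructor
          · rintro ⟨h1, h2, h3⟩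
            exact ⟨⟨_, h2⟩, ⟨rfl, h3⟩, h1⟩
          · rintro ⟨⟨j, hj⟩, ⟨h1, h2⟩, h3⟩
            dsimp only at h1 h3
            subst h1
            exact ⟨h3, hj, h2⟩
        rw [this]
        refine MeasurableSet.iUnion fun j => MeasurableSet.inter (ih _ ?_) ?_
        · exact hπmeas t h (.of_discrete (s := {j.1}))
        · exact hAH j.1 j.2 _ ⟨B, hB, rfl⟩
    exact hle _ hE

lemma ibet_eval {Ω : Type*} {m : MeasurableSpace Ω} {n : ℕ} {A : Fin n → Ω → ℝ}
    (hA : ∀ i, Measurable (A i)) {p : Ω → Fin n} (hp : Measurable p) :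
    Measurable (fun ω => A (p ω) ω) := by
  have hev : Measurable (fun q : Fin n × (Fin n → ℝ) => q.2 q.1) :=
    measurable_from_prod_countable_right fun i => measurable_pi_apply i
  exact hev.comp (hp.prodMk (measurable_pi_lambda (fun ω i => A i ω) hA))

lemma ibet_fac {Ω : Type*} {m : MeasurableSpace Ω} {x w a u : Ω → ℝ} (hx : Measurable x)
    (hw : Measurable w) (ha : Measurable a) (hu : Measurable u) :
    Measurable (fun ω => x ω * (1 + w ω * (a ω / u ω - 1))) := by
  fun_prop

/-- **Conditional type-I error control of the i-bet test.**
Under the global causal null, the type-I error control of the i-bet test holds conditionally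
on the outcomes and covariates: for every `α ∈ (0,1)`,
`P(∃ t ∈ {1,…,n − |I₀|}, M t ≥ 1/α | 𝒢) ≤ α` almost surely. -/
theorem ibet_conditional_type_one_error_control
    {Ω : Type*} {m0 : MeasurableSpace Ω} (P : Measure Ω) [IsProbabilityMeasure P]
    (n : ℕ) (μ : Fin n → ℝ) (hμ : ∀ i, μ i ∈ Set.Ioo (0:ℝ) 1)
    -- the treatment assignments
    (A : Fin n → Ω → ℝ) (hAmeas : ∀ i, Measurable (A i))
    (hA01 : ∀ i ω, A i ω = 0 ∨ A i ω = 1)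
    (hA1 : ∀ i, P {ω | A i ω = 1} = ENNReal.ofReal (μ i))
    -- the σ-algebra generated by all outcomes and covariates
    (𝒢 : MeasurableSpace Ω) (h𝒢 : 𝒢 ≤ m0)
    -- global causal null: the `A i` are mutually independent and the vector `(A 1, …, A n)`
    -- is independent of `𝒢`
    (hindep : iIndep (fun j : Option (Fin n) =>
        j.elim 𝒢 (fun i => MeasurableSpace.comap (A i) inferInstance)) P)
    -- the initially revealed holdout set
    (I₀ : Finset (Fin n))
    -- the interactively chosen ordering `π`, the revealed sets `I t`, and the filtration `ℱ`
    (π : ℕ → Ω → Fin n) (I : ℕ → Ω → Finset (Fin n)) (ℱ : ℕ → MeasurableSpace Ω)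
    (hI0 : ∀ ω, I 0 ω = I₀)
    (hIsucc : ∀ t, t + 1 ≤ n - I₀.card → ∀ ω, I (t+1) ω = insert (π (t+1) ω) (I t ω))
    (hℱ0 : ℱ 0 = 𝒢 ⊔ ⨆ i ∈ I₀, MeasurableSpace.comap (A i) inferInstance)
    (hℱsucc : ∀ t, t + 1 ≤ n - I₀.card → ℱ (t+1) = ℱ t ⊔
        MeasurableSpace.comap (fun ω => A (π (t+1) ω) ω) inferInstance)
    -- `π (t+1)` is `ℱ t`-measurable with values outside the already revealed set
    (hπmeas : ∀ t, t + 1 ≤ n - I₀.card → Measurable[ℱ t] (π (t+1)))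
    (hπnew : ∀ t, t + 1 ≤ n - I₀.card → ∀ ω, π (t+1) ω ∉ I t ω)
    -- the predictable bets
    (w : ℕ → Ω → ℝ)
    (hwmeas : ∀ t, t + 1 ≤ n - I₀.card → Measurable[ℱ t] (w (t+1)))
    (hw : ∀ t, t + 1 ≤ n - I₀.card → ∀ᵐ ω ∂P, w (t+1) ω ∈
        Set.Icc (-(μ (π (t+1) ω) / (1 - μ (π (t+1) ω)))) 1)
    -- the wealth process
    (M : ℕ → Ω → ℝ)
    (hM : ∀ t, t ≤ n - I₀.card → ∀ ω, M t ω = ∏ j ∈ Finset.range t,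
        (1 + w (j+1) ω * (A (π (j+1) ω) ω / μ (π (j+1) ω) - 1)))
    (α : ℝ) (hα : α ∈ Set.Ioo (0:ℝ) 1) :
    ∀ᵐ ω ∂P,
      (P[Set.indicator {ω' | ∃ t, 1 ≤ t ∧ t ≤ n - I₀.card ∧ 1/α ≤ M t ω'}
          (fun _ => (1:ℝ)) | 𝒢]) ω ≤ α := by
  have hAle : ∀ i, MeasurableSpace.comap (A i) inferInstance ≤ m0 := fun i =>
    (hAmeas i).comap_le
  set N := n - I₀.card with hN
  have hmono : ∀ t, t + 1 ≤ N → ℱ t ≤ ℱ (t+1) := fun t h => by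
    rw [hℱsucc t h]; exact le_sup_left
  have hle : ∀ t ≤ N, ℱ t ≤ m0 := by
    intro t
    induction t with
    | zero =>
      intro _; rw [hℱ0]
      exact sup_le h𝒢 (iSup₂_le fun j _ => hAle j)
    | succ t ih =>
      intro h
      rw [hℱsucc t h]
      refine sup_le (ih (by omega)) (Measurable.comap_le ?_)
      have hp : Measurable[m0] (π (t+1)) := (hπmeas t h).mono (ih (by omega)) le_rfl
      exact ibet_eval hAmeas hp
  have hM0 : ∀ ω, M 0 ω = 1 := fun ω => by rw [hM 0 (by omega)]; simp
  have hMs : ∀ t, t + 1 ≤ N → ∀ ω, M (t+1) ω = M t ω *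
      (1 + w (t+1) ω * (A (π (t+1) ω) ω / μ (π (t+1) ω) - 1)) := fun t h ω => by
    rw [hM (t+1) h, hM t (by omega), Finset.prod_range_succ]
  have hMm : ∀ t ≤ N, Measurable[ℱ t] (M t) := by
    intro t
    induction t with
    | zero =>
      intro _
      have : M 0 = fun _ => 1 := funext hM0
      rw [this]; exact @measurable_const _ _ _ (ℱ 0) _
    | succ t ih =>
      intro h
      have a1 : Measurable[ℱ (t+1)] (M t) := (ih (by omega)).mono (hmono t h) le_rfl
      have a2 : Measurable[ℱ (t+1)] (w (t+1)) := (hwmeas t h).mono (hmono t h) le_rfl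
      have a3 : Measurable[ℱ (t+1)] (fun ω => A (π (t+1) ω) ω) := by
        rw [hℱsucc t h]
        exact (comap_measurable _).mono le_sup_right le_rfl
      have a4 : Measurable[ℱ (t+1)] (fun ω => μ (π (t+1) ω)) :=
        (measurable_of_finite μ).comp ((hπmeas t h).mono (hmono t h) le_rfl)
      have : M (t+1) = fun ω => M t ω *
        (1 + w (t+1) ω * (A (π (t+1) ω) ω / μ (π (t+1) ω) - 1)) := funext (hMs t h)
      rw [this]
      exact ibet_fac a1 a2 a3 a4
  have hstep : ∀ t, t + 1 ≤ N → ∀ E, MeasurableSet[ℱ t] E →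
      ∫⁻ ω in E, ENNReal.ofReal (M (t+1) ω) ∂P = ∫⁻ ω in E, ENNReal.ofReal (M t ω) ∂P := by
    intro t h E hE
    have hEi : ∀ i, MeasurableSet[ℱ t] (E ∩ π (t+1) ⁻¹' {i}) := fun i =>
      @MeasurableSet.inter _ (ℱ t) _ _ hE (hπmeas t h (.of_discrete (s := {i})))
    have hEU : E = ⋃ i, E ∩ π (t+1) ⁻¹' {i} := by ext; simp
    have hdis : Pairwise (Function.onFun Disjoint fun i => E ∩ π (t+1) ⁻¹' {i}) := by
      intro i j hij
      refine Set.disjoint_left.2 ?_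
      rintro ω ⟨_, h1⟩ ⟨_, h2⟩
      exact hij (h1.symm.trans h2)
    have hsum : ∀ f : Ω → ℝ≥0∞, ∫⁻ ω in E, f ω ∂P = ∑' i, ∫⁻ ω in E ∩ π (t+1) ⁻¹' {i}, f ω ∂P := by
      intro f
      conv_lhs => rw [hEU]
      exact lintegral_iUnion (fun i => hle t (by omega) _ (hEi i)) hdis f
    rw [hsum, hsum]
    congr 1
    funext i
    set mm : Option (Fin n) → MeasurableSpace Ω := fun j : Option (Fin n) =>
        j.elim 𝒢 (fun i => MeasurableSpace.comap (A i) inferInstance) with hmm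
    have hmmle : ∀ j, mm j ≤ m0 := by
      rintro (_ | j)
      · exact h𝒢
      · exact hAle j
    let H : MeasurableSpace Ω := ⨆ j ∈ {j : Option (Fin n) | j ≠ some i}, mm j
    have hHle : H ≤ m0 := iSup₂_le fun j _ => hmmle j
    have hind : Indep H (MeasurableSpace.comap (A i) inferInstance) P := by
      have := indep_iSup_of_disjoint hmmle hindep
        (S := {j : Option (Fin n) | j ≠ some i}) (T := {some i}) (by simp)
      simpa [H, hmm] using this
    have hmH : ∀ j, j ≠ some i → mm j ≤ H := fun j hj =>
      le_iSup₂_of_le (f := fun j (_ : j ∈ {j : Option (Fin n) | j ≠ some i}) => mm j) j hj le_rfl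
    have hst := ibet_struct 𝒢 n N A I₀ π I ℱ hI0 hIsucc hℱ0 hℱsucc hπmeas i H
      (hmH none (by simp)) (fun j hj => hmH (some j) (by simpa using hj)) t (by omega)
    have := ibet_step P (hle t (by omega)) hHle (hEi i) (fun E' hE' hsub => by
        have e : E' ∩ {ω | i ∉ I t ω} = E' := by
          refine Set.inter_eq_left.2 fun ω hω => ?_
          have h1 : π (t+1) ω = i := (hsub hω).2
          have h2 := hπnew t h ω
          rw [h1] at h2
          exact h2
        have h3 := hst E' hE'
        rwa [e] at h3) (hμ i) (hAmeas i) (hA01 i) (hA1 i) hind (hwmeas t h) (hMm t (by omega))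
        (by
          filter_upwards [hw t h] with ω hω hs
          have h1 : π (t+1) ω = i := hs.2
          rwa [h1] at hω)
    rw [← this]
    refine setLIntegral_congr_fun (hle t (by omega) _ (hEi i)) ?_
    intro ω hω
    have h1 : π (t+1) ω = i := hω.2
    simp only [hMs t h, h1]
  have hville := fun G (hG : MeasurableSet[𝒢] G) =>
    ibet_ville ℱ P N hle hmono M hMm hM0 hstep (1/α) G (by
      rw [hℱ0]; exact (le_sup_left : 𝒢 ≤ _) _ hG)
  set K : Set Ω := {ω' | ∃ t, 1 ≤ t ∧ t ≤ N ∧ 1/α ≤ M t ω'} with hK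
  have hKm : MeasurableSet[m0] K := (hville ∅ (@MeasurableSet.empty _ 𝒢)).1
  have hint : Integrable (K.indicator (fun _ => (1:ℝ))) P := (integrable_const 1).indicator hKm
  have hfin : P[K.indicator (fun _ => (1:ℝ)) | 𝒢] ≤ᵐ[P.trim h𝒢] fun _ => α := by
    refine ae_le_of_forall_setIntegral_le
      (integrable_condExp.trim h𝒢 stronglyMeasurable_condExp) (integrable_const α) ?_
    intro G hG _
    rw [← setIntegral_trim h𝒢 stronglyMeasurable_condExp hG,
      ← setIntegral_trim h𝒢 stronglyMeasurable_const hG, setIntegral_condExp h𝒢 hint hG,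
      setIntegral_indicator hKm, setIntegral_const, setIntegral_const]
    have hv := (hville G hG).2
    have hv2 := ENNReal.toReal_mono (measure_ne_top P G) hv
    rw [ENNReal.toReal_mul, ENNReal.toReal_ofReal (by have := hα.1; positivity)] at hv2
    simp only [smul_eq_mul, mul_one]
    change P.real (G ∩ K) ≤ P.real G * α
    change 1 / α * P.real (G ∩ K) ≤ P.real G at hv2
    have h0 := hα.1
    rw [one_div, inv_mul_le_iff₀ h0] at hv2
    linarith
  exact ae_of_ae_trim h𝒢 hfin
end

section
/- Sampling without replacement (completely randomized experiment): under the global causal null, the conditional expectation of the interactively selected assignment given the revealed information equals the remaining proportion of treatments: for every t ≥ 1, E(A_{π_t} | ℱ_{t−1}) = (m − Σ_{i ∈ I_{t−1}} A_i)/(n − |I_{t−1}|) almost surely. -/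
open MeasureTheory ProbabilityTheory
open scoped ENNReal


theorem ibet_trace {Ω : Type*} (m1 m2 H : MeasurableSpace Ω) (D : Set Ω)
    (hD : MeasurableSet[H] D)
    (h1 : ∀ S, MeasurableSet[m1] S → MeasurableSet[H] (S ∩ D))
    (h2 : ∀ S, MeasurableSet[m2] S → MeasurableSet[H] (S ∩ D)) :
    ∀ S, MeasurableSet[m1 ⊔ m2] S → MeasurableSet[H] (S ∩ D) := by
  let M : MeasurableSpace Ω :=
    { MeasurableSet' := fun S => MeasurableSet[H] (S ∩ D)
      measurableSet_empty := by simp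
      measurableSet_compl := by
        intro S hS
        have : Sᶜ ∩ D = D \ (S ∩ D) := by ext x; simp; tauto
        rw [this]
        exact MeasurableSet.diff hD hS
      measurableSet_iUnion := by
        intro f hf
        rw [Set.iUnion_inter]
        exact MeasurableSet.iUnion hf }
  have hle : m1 ⊔ m2 ≤ M := sup_le (fun S hS => h1 S hS) (fun S hS => h2 S hS)
  exact fun S hS => hle S hS

theorem ibet_law {Ω : Type*} {m0 : MeasurableSpace Ω} (P : Measure Ω)
    {E : Type*} [MeasurableSpace E] [MeasurableSingletonClass E]
    (X Y : Ω → E) (hX : Measurable X) (hY : Measurable Y) (V : Set E) (hV : V.Finite)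
    (hXV : ∀ ω, X ω ∈ V) (hYV : ∀ ω, Y ω ∈ V)
    (h : ∀ v ∈ V, P (X ⁻¹' {v}) = P (Y ⁻¹' {v})) : IdentDistrib X Y P P := by
  classical
  refine ⟨hX.aemeasurable, hY.aemeasurable, ?_⟩
  ext B hB
  rw [Measure.map_apply hX hB, Measure.map_apply hY hB]
  have e1 : X ⁻¹' B = X ⁻¹' ((hV.toFinset.filter (· ∈ B) : Finset E) : Set E) := by
    ext ω; simp [hXV]
  have e2 : Y ⁻¹' B = Y ⁻¹' ((hV.toFinset.filter (· ∈ B) : Finset E) : Set E) := by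
    ext ω; simp [hYV]
  rw [e1, e2, ← sum_measure_preimage_singleton _ (fun y _ => hX (measurableSet_singleton y)),
    ← sum_measure_preimage_singleton _ (fun y _ => hY (measurableSet_singleton y))]
  refine Finset.sum_congr rfl fun v hv => h v ?_
  simp at hv
  exact hv.1

theorem ibet_sym {Ω : Type*} {m0 : MeasurableSpace Ω} (P : Measure Ω) [IsProbabilityMeasure P]
    {Ω' : Type*} [MeasurableSpace Ω'] (Z : Ω → Ω') (hZ : Measurable Z)
    {n : ℕ} (A : Fin n → Ω → ℝ) (hAmeas : ∀ i, Measurable (A i))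
    (σ : Equiv.Perm (Fin n))
    (hind : IndepFun Z (fun ω i => A i ω) P)
    (hid : IdentDistrib (fun ω i => A i ω) (fun ω i => A (σ i) ω) P P)
    (J : Finset (Fin n)) (hσ : ∀ i ∈ J, σ i = i) (j : Fin n) (T : Set (Ω' × (J → ℝ)))
    (hT : MeasurableSet T) :
    P ({ω | (Z ω, fun i : J => A i ω) ∈ T} ∩ {ω | A j ω = 1}) =
      P ({ω | (Z ω, fun i : J => A i ω) ∈ T} ∩ {ω | A (σ j) ω = 1}) := by
  have hind2 : IndepFun Z (fun ω i => A (σ i) ω) P :=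
    hind.comp (φ := id) (ψ := fun (x : Fin n → ℝ) i => x (σ i)) measurable_id (by fun_prop)
  have hp := (IdentDistrib.refl hZ.aemeasurable (μ := P)).prodMk hid hind hind2
  let T' : Set (Ω' × (Fin n → ℝ)) :=
    (fun p : Ω' × (Fin n → ℝ) => (p.1, fun i : J => p.2 i)) ⁻¹' T ∩ {p | p.2 j = 1}
  have hT' : MeasurableSet T' := by
    apply MeasurableSet.inter
    · exact (by fun_prop : Measurable
        (fun p : Ω' × (Fin n → ℝ) => (p.1, fun i : J => p.2 i))) hT
    · exact (by fun_prop : Measurable (fun p : Ω' × (Fin n → ℝ) => p.2 j))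
        (measurableSet_singleton 1)
  have := hp.measure_mem_eq hT'
  have e : ∀ ω, (fun i : J => A (σ i) ω) = fun i : J => A i ω := by
    intro ω
    funext i; rw [hσ i i.2]
  have e2 : (fun ω => (Z ω, fun i => A (σ i) ω)) ⁻¹' T' =
      {ω | (Z ω, fun i : J => A i ω) ∈ T} ∩ {ω | A (σ j) ω = 1} := by
    ext ω
    simp [T', e]
  rw [← e2]
  exact this

theorem ibet_exch {Ω : Type*} {m0 : MeasurableSpace Ω} (P : Measure Ω) [IsProbabilityMeasure P]
    (n m : ℕ)
    (A : Fin n → Ω → ℝ) (hAmeas : ∀ i, Measurable (A i))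
    (hA01 : ∀ i ω, A i ω = 0 ∨ A i ω = 1)
    (hAsum : ∀ ω, ∑ i, A i ω = (m : ℝ))
    (hAunif : ∀ v : Fin n → ℝ, (∀ i, v i = 0 ∨ v i = 1) → (∑ i, v i) = (m : ℝ) →
      P {ω | ∀ i, A i ω = v i} = ((n.choose m : ℝ≥0∞))⁻¹)
    (σ : Equiv.Perm (Fin n)) :
    IdentDistrib (fun ω i => A i ω) (fun ω i => A (σ i) ω) P P := by
  let V : Set (Fin n → ℝ) := {v | (∀ i, v i = 0 ∨ v i = 1) ∧ ∑ i, v i = (m : ℝ)}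
  have hV : V.Finite := by
    apply (Set.Finite.pi' (t := fun _ : Fin n => ({0, 1} : Set ℝ)) (fun _ => by simp)).subset
    intro v hv i
    simpa using hv.1 i
  refine ibet_law P _ _ (by fun_prop) (by fun_prop) V hV (fun ω => ⟨fun i => hA01 i ω, hAsum ω⟩)
    (fun ω => ⟨fun i => hA01 _ ω, ?_⟩) ?_
  · rw [← hAsum ω]; exact Equiv.sum_comp σ (fun i => A i ω)
  · intro v hv
    have e1 : (fun ω i => A i ω) ⁻¹' {v} = {ω | ∀ i, A i ω = v i} := by
      ext ω; simp [funext_iff]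
    have e2 : (fun ω i => A (σ i) ω) ⁻¹' {v} = {ω | ∀ i, A i ω = v (σ.symm i)} := by
      ext ω; simp only [Set.mem_preimage, Set.mem_singleton_iff, funext_iff, Set.mem_ofPred_eq]
      constructor
      · intro h i; simpa using h (σ.symm i)
      · intro h i; simpa using h (σ i)
    rw [e1, e2, hAunif v hv.1 hv.2, hAunif _ (fun i => hv.1 _)]
    rw [← hv.2]; exact Equiv.sum_comp σ.symm v

theorem ibet_swap {Ω : Type*} {m0 : MeasurableSpace Ω} (P : Measure Ω) [IsProbabilityMeasure P]
    (n m : ℕ)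
    (A : Fin n → Ω → ℝ) (hAmeas : ∀ i, Measurable (A i))
    (hA01 : ∀ i ω, A i ω = 0 ∨ A i ω = 1)
    (hAsum : ∀ ω, ∑ i, A i ω = (m : ℝ))
    (hAunif : ∀ v : Fin n → ℝ, (∀ i, v i = 0 ∨ v i = 1) → (∑ i, v i) = (m : ℝ) →
      P {ω | ∀ i, A i ω = v i} = ((n.choose m : ℝ≥0∞))⁻¹)
    (𝒢 : MeasurableSpace Ω) (h𝒢 : 𝒢 ≤ m0)
    (hindep : Indep (⨆ i, MeasurableSpace.comap (A i) inferInstance) 𝒢 P)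
    (J : Finset (Fin n)) (j k : Fin n) (hj : j ∉ J) (hk : k ∉ J) (S : Set Ω)
    (hS : MeasurableSet[𝒢 ⊔ ⨆ i ∈ J, MeasurableSpace.comap (A i) inferInstance] S) :
    P (S ∩ {ω | A j ω = 1}) = P (S ∩ {ω | A k ω = 1}) := by
  classical
  have hle : 𝒢 ⊔ ⨆ i ∈ J, MeasurableSpace.comap (A i) inferInstance ≤
      MeasurableSpace.comap (fun ω => (ω, fun i : J => A i ω))
        (@Prod.instMeasurableSpace Ω (J → ℝ) 𝒢 inferInstance) := by
    refine sup_le ?_ (iSup₂_le ?_)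
    · intro S hS
      exact ⟨Prod.fst ⁻¹' S, (@measurable_fst Ω (J → ℝ) 𝒢 _) hS, rfl⟩
    · rintro i hi S ⟨B, hB, rfl⟩
      refine ⟨Prod.snd ⁻¹' ((fun x : J → ℝ => x ⟨i, hi⟩) ⁻¹' B),
        (@measurable_snd Ω (J → ℝ) 𝒢 _) (measurable_pi_apply _ hB), rfl⟩
  obtain ⟨T, hT, rfl⟩ := hle S hS
  have hind : @IndepFun Ω Ω (Fin n → ℝ) m0 𝒢 _ id (fun ω i => A i ω) P := by
    have h := hindep.symm
    rw [IndepFun_iff_Indep, MeasurableSpace.comap_id, MeasurableSpace.pi,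
      MeasurableSpace.comap_iSup]
    simp only [MeasurableSpace.comap_comp]
    exact h
  have := @ibet_sym Ω m0 P _ Ω 𝒢 id (measurable_id'' h𝒢) n A hAmeas (Equiv.swap j k) hind
    (ibet_exch P n m A hAmeas hA01 hAsum hAunif _) J (fun i hi => Equiv.swap_apply_of_ne_of_ne
      (by rintro rfl; exact hj hi) (by rintro rfl; exact hk hi)) j T hT
  rw [Equiv.swap_apply_left] at this
  exact this

theorem ibet_int {Ω : Type*} {m0 : MeasurableSpace Ω} (P : Measure Ω) [IsProbabilityMeasure P]
    (n m : ℕ)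
    (A : Fin n → Ω → ℝ) (hAmeas : ∀ i, Measurable (A i))
    (hA01 : ∀ i ω, A i ω = 0 ∨ A i ω = 1)
    (hAsum : ∀ ω, ∑ i, A i ω = (m : ℝ))
    (H : MeasurableSpace Ω) (hH : H ≤ m0) (J : Finset (Fin n))
    (hswap : ∀ j k : Fin n, j ∉ J → k ∉ J → ∀ S, MeasurableSet[H] S →
      P (S ∩ {ω | A j ω = 1}) = P (S ∩ {ω | A k ω = 1}))
    (j : Fin n) (hj : j ∉ J) (S : Set Ω) (hS : MeasurableSet[H] S) :
    ∫ ω in S, A j ω ∂P = ∫ ω in S, ((m : ℝ) - ∑ i ∈ J, A i ω) / ((n : ℝ) - J.card) ∂P := by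
  classical
  have hint : ∀ i, Integrable (A i) P := fun i => by
    refine Integrable.of_bound (hAmeas i).aestronglyMeasurable 1 (.of_forall fun ω => ?_)
    rcases hA01 i ω with h | h <;> simp [h]
  have hAi : ∀ i, ∫ ω in S, A i ω ∂P = P.real (S ∩ {ω | A i ω = 1}) := by
    intro i
    have hm1 : MeasurableSet[m0] {ω | A i ω = 1} := hAmeas i (measurableSet_singleton 1)
    have : A i = Set.indicator {ω | A i ω = 1} 1 := by
      funext ω
      rcases hA01 i ω with h | h <;> simp [Set.indicator, h]
    have e := integral_indicator_one (μ := P.restrict S) hm1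
    rw [← this, measureReal_restrict_apply hm1, Set.inter_comm] at e
    exact e
  have hcomp : ∀ ω, (m : ℝ) - ∑ i ∈ J, A i ω = ∑ i ∈ Jᶜ, A i ω := fun ω => by
    rw [← hAsum ω, ← Finset.sum_add_sum_compl J]; ring
  have hcard : ((n : ℝ) - J.card) = (Jᶜ.card : ℝ) := by
    have := Finset.card_add_card_compl J
    rw [Fintype.card_fin] at this
    have h2 : (J.card : ℝ) + (Jᶜ.card : ℝ) = (n : ℝ) := by exact_mod_cast this
    linarith
  have hpos : (Jᶜ.card : ℝ) ≠ 0 := by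
    have : j ∈ Jᶜ := by simpa using hj
    exact_mod_cast (Finset.card_pos.mpr ⟨j, this⟩).ne'
  simp_rw [hcomp, hcard]
  rw [integral_div, integral_finsetSum _ (fun i _ => (hint i).integrableOn), eq_div_iff hpos]
  rw [Finset.sum_congr rfl (g := fun _ => ∫ ω in S, A j ω ∂P)]
  · simp [mul_comm]
  · intro i hi
    rw [hAi, hAi, measureReal_def, measureReal_def, hswap i j (by simpa using hi) hj S hS]

/-- **Sampling without replacement (completely randomized experiment).**
Under the global causal null, with `(A 1, …, A n)` uniformly distributed over binary vectors
summing to `m` and independent of `𝒢`, the conditional expectation of the interactively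
selected assignment given the revealed information equals the remaining proportion of
treatments: `E(A (π t) | ℱ (t−1)) = (m − Σ_{i ∈ I (t−1)} A i) / (n − |I (t−1)|)` a.s. -/
theorem ibet_without_replacement_condexp
    {Ω : Type*} {m0 : MeasurableSpace Ω} (P : Measure Ω) [IsProbabilityMeasure P]
    (n m : ℕ) (hm : 1 ≤ m) (hmn : m ≤ n - 1)
    -- the treatment assignments: a uniformly random binary vector with sum `m`
    (A : Fin n → Ω → ℝ) (hAmeas : ∀ i, Measurable (A i))
    (hA01 : ∀ i ω, A i ω = 0 ∨ A i ω = 1)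
    (hAsum : ∀ ω, ∑ i, A i ω = (m : ℝ))
    (hAunif : ∀ v : Fin n → ℝ, (∀ i, v i = 0 ∨ v i = 1) → (∑ i, v i) = (m : ℝ) →
      P {ω | ∀ i, A i ω = v i} = ((n.choose m : ℝ≥0∞))⁻¹)
    -- the σ-algebra generated by all outcomes and covariates, independent of the vector `A`
    (𝒢 : MeasurableSpace Ω) (h𝒢 : 𝒢 ≤ m0)
    (hindep : Indep (⨆ i, MeasurableSpace.comap (A i) inferInstance) 𝒢 P)
    -- the initially revealed holdout set
    (I₀ : Finset (Fin n))
    -- the interactively chosen ordering `π`, the revealed sets `I t`, and the filtration `ℱ`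
    (π : ℕ → Ω → Fin n) (I : ℕ → Ω → Finset (Fin n)) (ℱ : ℕ → MeasurableSpace Ω)
    (hI0 : ∀ ω, I 0 ω = I₀)
    (hIsucc : ∀ t, t + 1 ≤ n - I₀.card → ∀ ω, I (t+1) ω = insert (π (t+1) ω) (I t ω))
    (hℱ0 : ℱ 0 = 𝒢 ⊔ ⨆ i ∈ I₀, MeasurableSpace.comap (A i) inferInstance)
    (hℱsucc : ∀ t, t + 1 ≤ n - I₀.card → ℱ (t+1) = ℱ t ⊔
        MeasurableSpace.comap (fun ω => A (π (t+1) ω) ω) inferInstance)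
    (hπmeas : ∀ t, t + 1 ≤ n - I₀.card → Measurable[ℱ t] (π (t+1)))
    (hπnew : ∀ t, t + 1 ≤ n - I₀.card → ∀ ω, π (t+1) ω ∉ I t ω) :
    ∀ t, t + 1 ≤ n - I₀.card →
      P[fun ω => A (π (t+1) ω) ω | ℱ t] =ᵐ[P]
        fun ω => ((m : ℝ) - ∑ i ∈ I t ω, A i ω) / ((n : ℝ) - (I t ω).card) := by
  classical
  let H : Finset (Fin n) → MeasurableSpace Ω :=
    fun J => 𝒢 ⊔ ⨆ i ∈ J, MeasurableSpace.comap (A i) inferInstance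
  have hHm0 : ∀ J, H J ≤ m0 := fun J =>
    sup_le h𝒢 (iSup₂_le fun i _ => (hAmeas i).comap_le)
  have hHmono : ∀ J K, J ⊆ K → H J ≤ H K := fun J K h =>
    sup_le_sup le_rfl (biSup_mono h)
  have hHA : ∀ J, ∀ i ∈ J, ∀ B : Set ℝ, MeasurableSet B → MeasurableSet[H J] (A i ⁻¹' B) := by
    intro J i hi B hB
    have : MeasurableSpace.comap (A i) inferInstance ≤ H J :=
      le_trans (le_iSup₂_of_le i hi le_rfl) le_sup_right
    exact this _ ⟨B, hB, rfl⟩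
  have htrace : ∀ t, t ≤ n - I₀.card → ∀ J S, MeasurableSet[ℱ t] S →
      MeasurableSet[H J] (S ∩ {ω | I t ω = J}) := by
    intro t
    induction t with
    | zero =>
      intro _ J S hS
      by_cases h : I₀ = J
      · subst h
        simp only [hI0, Set.ofPred_true, Set.inter_univ]
        rw [hℱ0] at hS
        exact hS
      · simp [hI0, h]
    | succ t ih =>
      intro ht J
      have ih := ih (by omega)
      have hπj : ∀ j, MeasurableSet[ℱ t] (π (t+1) ⁻¹' {j}) :=
        fun j => hπmeas t ht (measurableSet_singleton j)
      have hset : {ω | I (t+1) ω = J} = ⋃ j ∈ J,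
          (π (t+1) ⁻¹' {j} ∩ {ω | I t ω = J.erase j}) := by
        ext ω
        simp only [Set.mem_ofPred_eq, Set.mem_iUnion, Set.mem_inter_iff, Set.mem_preimage,
          Set.mem_singleton_iff, hIsucc t ht ω, exists_prop]
        constructor
        · rintro rfl
          refine ⟨_, Finset.mem_insert_self _ _, rfl, ?_⟩
          rw [Finset.erase_insert (hπnew t ht ω)]
        · rintro ⟨j, hj, rfl, h⟩
          rw [h, Finset.insert_erase hj]
      have h1 : ∀ S, MeasurableSet[ℱ t] S → MeasurableSet[H J] (S ∩ {ω | I (t+1) ω = J}) := by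
        intro S hS
        rw [hset, Set.inter_iUnion₂]
        refine Finset.measurableSet_biUnion _ fun j hj => ?_
        rw [← Set.inter_assoc]
        exact hHmono _ _ (Finset.erase_subset j J) _ (ih _ _ (MeasurableSet.inter hS (hπj j)))
      rw [hℱsucc t ht]
      refine ibet_trace _ _ _ _ ?_ h1 ?_
      · simpa using h1 Set.univ MeasurableSet.univ
      · rintro S ⟨B, hB, rfl⟩
        rw [hset, Set.inter_iUnion₂]
        refine Finset.measurableSet_biUnion _ fun j hj => ?_
        have : (fun ω => A (π (t+1) ω) ω) ⁻¹' B ∩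
            (π (t+1) ⁻¹' {j} ∩ {ω | I t ω = J.erase j}) =
            A j ⁻¹' B ∩ (π (t+1) ⁻¹' {j} ∩ {ω | I t ω = J.erase j}) := by
          ext ω
          simp only [Set.mem_inter_iff, Set.mem_preimage, Set.mem_singleton_iff]
          constructor
          · rintro ⟨h, rfl, h'⟩; exact ⟨h, rfl, h'⟩
          · rintro ⟨h, rfl, h'⟩; exact ⟨h, rfl, h'⟩
        rw [this]
        exact MeasurableSet.inter (hHA J j hj B hB)
          (hHmono _ _ (Finset.erase_subset j J) _ (ih _ _ (hπj j)))
  have hℱm0 : ∀ t, t ≤ n - I₀.card → ℱ t ≤ m0 := by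
    intro t ht S hS
    have : S = ⋃ J, (S ∩ {ω | I t ω = J}) := by ext; simp
    rw [this]
    exact MeasurableSet.iUnion fun J => hHm0 J _ (htrace t ht J S hS)
  have hcard : ∀ t, t ≤ n - I₀.card → ∀ ω, (I t ω).card = I₀.card + t := by
    intro t
    induction t with
    | zero => intro _ ω; simp [hI0]
    | succ t ih =>
      intro ht ω
      rw [hIsucc t ht, Finset.card_insert_of_notMem (hπnew t ht ω), ih (by omega)]; ring
  have hsum : ∀ t, t ≤ n - I₀.card → Measurable[ℱ t] (fun ω => ∑ i ∈ I t ω, A i ω) := by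
    intro t
    induction t with
    | zero =>
      intro _
      simp only [hI0]
      refine Finset.measurable_fun_sum _ fun i hi => ?_
      intro B hB
      rw [hℱ0]
      exact hHA I₀ i hi B hB
    | succ t ih =>
      intro ht
      have : (fun ω => ∑ i ∈ I (t+1) ω, A i ω) =
          fun ω => A (π (t+1) ω) ω + ∑ i ∈ I t ω, A i ω := by
        funext ω
        rw [hIsucc t ht, Finset.sum_insert (hπnew t ht ω)]
      rw [this, hℱsucc t ht]
      refine Measurable.add ?_ ?_
      · exact (comap_measurable _).mono le_sup_right le_rfl
      · exact (ih (by omega)).mono le_sup_left le_rfl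
  intro t ht
  have ht' : t ≤ n - I₀.card := by omega
  have hle := hℱm0 t ht'
  have hAπm : Measurable[m0] (fun ω => A (π (t+1) ω) ω) := by
    refine Measurable.mono (comap_measurable _) (le_trans ?_ (hℱm0 (t+1) ht)) le_rfl
    rw [hℱsucc t ht]
    exact le_sup_right
  have hAπint : Integrable (fun ω => A (π (t+1) ω) ω) P := by
    refine Integrable.of_bound hAπm.aestronglyMeasurable 1 (.of_forall fun ω => ?_)
    rcases hA01 (π (t+1) ω) ω with h | h <;> simp [h]
  have hgm : Measurable[ℱ t]
      (fun ω => ((m : ℝ) - ∑ i ∈ I t ω, A i ω) / ((n : ℝ) - (I t ω).card)) := by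
    simp only [hcard t ht']
    exact (measurable_const.sub (hsum t ht')).div_const _
  have hgint : Integrable
      (fun ω => ((m : ℝ) - ∑ i ∈ I t ω, A i ω) / ((n : ℝ) - (I t ω).card)) P := by
    simp only [hcard t ht']
    refine Integrable.div_const ?_ _
    refine Integrable.sub (integrable_const _) ?_
    refine Integrable.of_bound ((hsum t ht').mono hle le_rfl).aestronglyMeasurable n
      (.of_forall fun ω => ?_)
    refine (norm_sum_le _ _).trans ?_
    refine (Finset.sum_le_card_nsmul _ _ 1 fun i _ => ?_).trans ?_
    · rcases hA01 i ω with h | h <;> simp [h]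
    · simpa using (Finset.card_le_univ (I t ω))
  symm
  refine ae_eq_condExp_of_forall_setIntegral_eq hle hAπint (fun _ _ _ => hgint.integrableOn) ?_
    hgm.stronglyMeasurable.aestronglyMeasurable
  intro S hS _
  let Q : Finset (Fin n) × Fin n → Set Ω := fun p =>
    (S ∩ π (t+1) ⁻¹' {p.2}) ∩ {ω | I t ω = p.1}
  have hQH : ∀ p, MeasurableSet[H p.1] (Q p) := fun p =>
    htrace t ht' p.1 _ (MeasurableSet.inter hS (hπmeas t ht (measurableSet_singleton p.2)))
  have hQm : ∀ p, MeasurableSet[m0] (Q p) := fun p => hHm0 _ _ (hQH p)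
  have hSQ : S = ⋃ p, Q p := by
    ext ω
    simp [Q]
  have hdisj : Pairwise (Function.onFun Disjoint Q) := by
    intro p q hpq
    refine Set.disjoint_left.mpr fun ω h1 h2 => hpq ?_
    exact Prod.ext (h1.2.symm.trans h2.2) (h1.1.2.symm.trans h2.1.2)
  rw [hSQ, integral_iUnion_fintype hQm hdisj (fun _ => hgint.integrableOn),
    integral_iUnion_fintype hQm hdisj (fun _ => hAπint.integrableOn)]
  refine Finset.sum_congr rfl fun p _ => ?_
  by_cases hp : p.2 ∈ p.1
  · have : Q p = ∅ := by
      ext ω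
      simp only [Set.mem_empty_iff_false, iff_false]
      rintro ⟨⟨_, h1⟩, h2⟩
      apply hπnew t ht ω
      rw [show π (t+1) ω = p.2 from h1, show I t ω = p.1 from h2]
      exact hp
    simp [this]
  · have key := ibet_int P n m A hAmeas hA01 hAsum (H p.1) (hHm0 _) p.1
      (fun j k hj hk S hS => ibet_swap P n m A hAmeas hA01 hAsum hAunif 𝒢 h𝒢 hindep p.1 j k
        hj hk S hS) p.2 hp (Q p) (hQH p)
    refine Eq.trans ?_ (key.symm.trans ?_)
    · refine setIntegral_congr_fun (hQm p) ?_
      intro ω hω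
      have h2 : I t ω = p.1 := hω.2
      simp only [h2]
    · refine setIntegral_congr_fun (hQm p) ?_
      intro ω hω
      have h1 : π (t+1) ω = p.2 := hω.1.2
      simp only [h1]
end

section
/- Sequential i-bet test: under the global null, let A_1, A_2, … be independent {0,1}-valued random variables with P(A_t = 1) = μ_t ∈ (0,1), such that A_t is independent of 𝒢_{t−1} for every t; let I_t ∈ {0,1} and w_t ∈ [−μ_t/(1−μ_t), 1] be 𝒢_{t−1}-measurable, and define M_0 = 1, M_t = ∏_{i=1}^t [1 + I_i·w_i·(A_i/μ_i − 1)]. Then (M_t)_{t≥0} is a nonnegative martingale with respect to (𝒢_t) with M_0 = 1, and for every α ∈ (0,1), P(∃ t ≥ 1 : M_t ≥ 1/α) ≤ α. -/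
open MeasureTheory ProbabilityTheory
open scoped ENNReal

/-- **Sequential i-bet test.** Under the global null, let `A 1, A 2, …` be independent
`{0,1}`-valued random variables with `P(A t = 1) = μ t ∈ (0,1)`, with `A t` independent of
`𝒢 (t−1)`; let the inclusion indicators `I t ∈ {0,1}` and the bets
`w t ∈ [−μ t/(1−μ t), 1]` be `𝒢 (t−1)`-measurable, and set
`M t = ∏_{i=1}^t [1 + I i · w i · (A i/μ i − 1)]`, `M 0 = 1`. Then `(M t)` is a nonnegative
martingale with respect to `(𝒢 t)` with `M 0 = 1`, and for every `α ∈ (0,1)`,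
`P(∃ t ≥ 1, M t ≥ 1/α) ≤ α`. -/
theorem sequential_ibet
    {Ω : Type*} {m0 : MeasurableSpace Ω} (P : Measure Ω) [IsProbabilityMeasure P]
    (𝒢 : Filtration ℕ m0)
    (A : ℕ → Ω → ℝ) (μ : ℕ → ℝ)
    (hμ : ∀ t, μ (t+1) ∈ Set.Ioo (0:ℝ) 1)
    (hAmeas : ∀ t, StronglyMeasurable[𝒢 (t+1)] (A (t+1)))
    (hA01 : ∀ t ω, A (t+1) ω = 0 ∨ A (t+1) ω = 1)
    (hA1 : ∀ t, P {ω | A (t+1) ω = 1} = ENNReal.ofReal (μ (t+1)))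
    -- under the null, `A (t+1)` is independent of the revealed information `𝒢 t`
    (hAindep : ∀ t, Indep (MeasurableSpace.comap (A (t+1)) inferInstance) (𝒢 t) P)
    -- the analyst's predictable inclusion indicators
    (I : ℕ → Ω → ℝ) (hImeas : ∀ t, Measurable[𝒢 t] (I (t+1)))
    (hI01 : ∀ t ω, I (t+1) ω = 0 ∨ I (t+1) ω = 1)
    -- the predictable bets
    (w : ℕ → Ω → ℝ) (hwmeas : ∀ t, Measurable[𝒢 t] (w (t+1)))
    (hw : ∀ t ω, w (t+1) ω ∈ Set.Icc (-(μ (t+1) / (1 - μ (t+1)))) 1)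
    -- the wealth process
    (M : ℕ → Ω → ℝ)
    (hM : ∀ t ω, M t ω = ∏ i ∈ Finset.range t,
        (1 + I (i+1) ω * w (i+1) ω * (A (i+1) ω / μ (i+1) - 1))) :
    (Martingale M 𝒢 P ∧ (∀ t, 0 ≤ᵐ[P] M t) ∧ (∀ ω, M 0 ω = 1)) ∧
    ∀ α ∈ Set.Ioo (0:ℝ) 1,
      P {ω | ∃ t, 1 ≤ t ∧ 1/α ≤ M t ω} ≤ ENNReal.ofReal α := by
  have hM0 : ∀ ω, M 0 ω = 1 := fun ω => by simp [hM]
  have hMs : ∀ t ω, M (t+1) ω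
      = M t ω * (1 + I (t+1) ω * w (t+1) ω * (A (t+1) ω / μ (t+1) - 1)) := fun t ω => by
    rw [hM, hM, Finset.prod_range_succ]
  have hfac : ∀ t ω, 0 ≤ 1 + I (t+1) ω * w (t+1) ω * (A (t+1) ω / μ (t+1) - 1) ∧
      1 + I (t+1) ω * w (t+1) ω * (A (t+1) ω / μ (t+1) - 1)
        ≤ 1 + 1 / μ (t+1) + μ (t+1) / (1 - μ (t+1)) := by
    intro t ω
    obtain ⟨h0, h1⟩ := hμ t
    obtain ⟨hw0, hw1⟩ := hw t ω
    have h1' : 0 < 1 - μ (t+1) := by linarith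
    have hp : 0 < 1 / μ (t+1) := by positivity
    have hq : 0 < μ (t+1) / (1 - μ (t+1)) := by positivity
    have hr : 0 < 1 / μ (t+1) - 1 := by
      rw [sub_pos, lt_div_iff₀ h0]; linarith
    have hqr : μ (t+1) / (1 - μ (t+1)) * (1 / μ (t+1) - 1) = 1 := by
      field_simp
    rcases hI01 t ω with hI | hI <;> rcases hA01 t ω with hA | hA <;> rw [hI, hA]
    · constructor <;> linarith
    · constructor <;> linarith
    · rw [zero_div]
      constructor <;> linarith
    · constructor <;> nlinarith
  have hnn : ∀ t ω, 0 ≤ M t ω := fun t ω => by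
    rw [hM]; exact Finset.prod_nonneg fun i _ => (hfac i ω).1
  have hbd : ∀ t, ∃ C, ∀ ω, M t ω ≤ C := fun t => by
    refine ⟨∏ i ∈ Finset.range t, (1 + 1 / μ (i+1) + μ (i+1) / (1 - μ (i+1))), fun ω => ?_⟩
    rw [hM]
    exact Finset.prod_le_prod (fun i _ => (hfac i ω).1) (fun i _ => (hfac i ω).2)
  have hadp : ∀ t, StronglyMeasurable[𝒢 t] (M t) := by
    intro t
    induction t with
    | zero =>
      have : M 0 = fun _ => 1 := funext hM0
      rw [this]; exact stronglyMeasurable_const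
    | succ t ih =>
      have hle : 𝒢 t ≤ 𝒢 (t+1) := 𝒢.mono (Nat.le_succ t)
      have e : M (t+1) = fun ω => M t ω *
        (1 + I (t+1) ω * w (t+1) ω * (A (t+1) ω / μ (t+1) - 1)) := funext (hMs t)
      have a1 : Measurable[𝒢 (t+1)] (M t) := ih.measurable.mono hle le_rfl
      have a2 : Measurable[𝒢 (t+1)] (I (t+1)) := (hImeas t).mono hle le_rfl
      have a3 : Measurable[𝒢 (t+1)] (w (t+1)) := (hwmeas t).mono hle le_rfl
      have a4 : Measurable[𝒢 (t+1)] (A (t+1)) := (hAmeas t).measurable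
      rw [e]
      apply Measurable.stronglyMeasurable
      exact a1.mul (((a2.mul a3).mul ((a4.div_const _).sub_const _)).const_add _)
  have hint : ∀ t, Integrable (M t) P := by
    intro t
    obtain ⟨C, hC⟩ := hbd t
    refine Integrable.of_bound ((hadp t).mono (𝒢.le t)).aestronglyMeasurable C
      (Filter.Eventually.of_forall fun ω => ?_)
    rw [Real.norm_eq_abs, abs_of_nonneg (hnn t ω)]
    exact hC ω
  have hAm : ∀ t, Measurable (A (t+1)) := fun t => (hAmeas t).measurable.mono (𝒢.le _) le_rfl
  have hAint : ∀ t, Integrable (A (t+1)) P := by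
    intro t
    refine Integrable.of_bound (hAm t).aestronglyMeasurable 1
      (Filter.Eventually.of_forall fun ω => ?_)
    rcases hA01 t ω with h | h <;> simp [h]
  have hAE : ∀ t, ∫ ω, A (t+1) ω ∂P = μ (t+1) := by
    intro t
    have e : A (t+1) = Set.indicator {ω | A (t+1) ω = 1} (fun _ => (1:ℝ)) := by
      funext ω
      by_cases h : A (t+1) ω = 1
      · simp [Set.indicator, h]
      · have h' := (hA01 t ω).resolve_right h
        simp [Set.indicator, h']
    have hs : MeasurableSet {ω | A (t+1) ω = 1} := hAm t (measurableSet_singleton 1)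
    rw [e, integral_indicator_const _ hs, measureReal_def, hA1,
      ENNReal.toReal_ofReal (hμ t).1.le]
    simp
  have hmart : Martingale M 𝒢 P := by
    refine martingale_nat hadp hint fun t => ?_
    let g : Ω → ℝ := fun ω => A (t+1) ω / μ (t+1) - 1
    let f : Ω → ℝ := fun ω => M t ω * (I (t+1) ω * w (t+1) ω)
    have hg : Integrable g P := ((hAint t).div_const _).sub (integrable_const _)
    have hf : StronglyMeasurable[𝒢 t] f := by
      apply Measurable.stronglyMeasurable
      exact (hadp t).measurable.mul ((hImeas t).mul (hwmeas t))
    have e : M (t+1) = M t + f * g := by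
      funext ω
      simp only [Pi.add_apply, Pi.mul_apply, hMs, f, g]
      ring
    have hfg : Integrable (f * g) P := by
      have : f * g = M (t+1) - M t := by rw [e]; simp
      rw [this]; exact (hint _).sub (hint _)
    have hgE : ∫ ω, g ω ∂P = 0 := by
      simp only [g]
      rw [integral_sub ((hAint t).div_const _) (integrable_const _), integral_div, hAE,
        div_self (hμ t).1.ne']
      simp
    have hgm : StronglyMeasurable[MeasurableSpace.comap (A (t+1)) inferInstance] g := by
      apply Measurable.stronglyMeasurable
      exact ((comap_measurable (A (t+1))).div_const _).sub_const _
    have h1 := condExp_indep_eq (hAm t).comap_le (𝒢.le t) hgm (hAindep t)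
    have h2 := condExp_mul_of_stronglyMeasurable_left hf hfg hg
    have h3 := condExp_add (hint t) hfg (𝒢 t)
    have h4 := condExp_of_stronglyMeasurable (𝒢.le t) (hadp t) (hint t)
    rw [e]
    filter_upwards [h1, h2, h3] with ω k1 k2 k3
    rw [k3, Pi.add_apply, k2, Pi.mul_apply, k1, hgE, h4]
    simp
  refine ⟨⟨hmart, fun t => Filter.Eventually.of_forall (hnn t), hM0⟩, ?_⟩
  intro α hα
  have hα0 : 0 < α := hα.1
  have hE : ∀ n, ∫ ω, M n ω ∂P = 1 := by
    intro n
    have := hmart.setIntegral_eq (Nat.zero_le n) (MeasurableSet.univ)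
    simp only [Measure.restrict_univ] at this
    rw [← this]; simp [hM0]
  let S : ℕ → Set Ω := fun n => {ω | ∃ t, t ≤ n ∧ 1/α ≤ M t ω}
  have hSm : Monotone S := fun a b hab ω ⟨t, ht, h⟩ => ⟨t, ht.trans hab, h⟩
  have hSb : ∀ n, P (S n) ≤ ENNReal.ofReal α := by
    intro n
    let ε : NNReal := (1/α).toNNReal
    have hε : (ε : ℝ) = 1/α := Real.coe_toNNReal _ (by positivity)
    have key := maximal_ineq hmart.submartingale (fun t ω => hnn t ω) (ε := ε) n
    have hset : {ω | (ε : ℝ) ≤ (Finset.range (n+1)).sup' Finset.nonempty_range_add_one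
        fun k => M k ω} = S n := by
      ext ω
      simp only [Set.mem_setOf_eq, Finset.le_sup'_iff, Finset.mem_range, hε, S,
        Nat.lt_succ_iff]
    rw [hset] at key
    have h1 : (ε : ℝ≥0∞) * P (S n) ≤ 1 := by
      refine key.trans ?_
      rw [← ENNReal.ofReal_one]
      apply ENNReal.ofReal_le_ofReal
      rw [← hE n]
      exact setIntegral_le_integral (hint n) (Filter.Eventually.of_forall (hnn n))
    calc P (S n) = ENNReal.ofReal α * ((ε : ℝ≥0∞) * P (S n)) := by
          rw [← mul_assoc]
          have : ENNReal.ofReal α * (ε : ℝ≥0∞) = 1 := by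
            change ENNReal.ofReal α * ENNReal.ofReal (1/α) = 1
            rw [← ENNReal.ofReal_mul hα0.le, mul_one_div_cancel hα0.ne', ENNReal.ofReal_one]
          rw [this, one_mul]
      _ ≤ ENNReal.ofReal α * 1 := by gcongr
      _ = ENNReal.ofReal α := mul_one _
  calc P {ω | ∃ t, 1 ≤ t ∧ 1/α ≤ M t ω} ≤ P (⋃ n, S n) :=
        measure_mono fun ω ⟨t, _, h⟩ => Set.mem_iUnion.2 ⟨t, t, le_rfl, h⟩
    _ = ⨆ n, P (S n) := hSm.measure_iUnion
    _ ≤ ENNReal.ofReal α := iSup_le hSb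
end
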